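/- Let r > 0 and let X be an ℝ^d-valued random vector with finite moments of every order (E|X|^m < ∞ for all m > 0), whose law has a non-zero absolutely continuous component with respect to Lebesgue measure on ℝ^d. Let (Γ_N)_{N≥1} be a sequence of L^r-optimal quantizers of X, i.e. card(Γ_N) ≤ N and e_r(Γ_N, X) = e_{r,N}(X) for every N ≥ 1. Then for every s ∈ (r, d+r) and every r' > sd/(d+r−s), there exists a finite constant K̃_{d,r,r',s}, depending only on d, r, r' and s, such that for every N ≥ 1: e_s(Γ_N, X) ≤ K̃_{d,r,r',s} · σ_{r'}(X) · N^{−1/d}. -/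

import Mathlib

open MeasureTheory Real

noncomputable section

abbrev Euc (d : ℕ) : Type := EuclideanSpace ℝ (Fin d)

/-- L^p quantization error of a random vector `X` w.r.t. a grid `Γ`. -/
def quantErrRV (p : ℝ) {Ω : Type*} [MeasurableSpace Ω] (P : Measure Ω) {d : ℕ}
    (X : Ω → Euc d) (Γ : Finset (Euc d)) : ℝ :=
  (∫ ω, (Metric.infDist (X ω) (Γ : Set (Euc d))) ^ p ∂P) ^ (1 / p)

/-- Optimal L^p quantization error at level `N`. -/
def optQuantErrRV (p : ℝ) (N : ℕ) {Ω : Type*} [MeasurableSpace Ω] (P : Measure Ω) {d : ℕ}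
    (X : Ω → Euc d) : ℝ :=
  sInf {e | ∃ Γ : Finset (Euc d), Γ.Nonempty ∧ Γ.card ≤ N ∧ e = quantErrRV p P X Γ}

/-- `σ_p(X)`, the L^p pseudo-standard deviation. -/
def sigmaRV (p : ℝ) {Ω : Type*} [MeasurableSpace Ω] (P : Measure Ω) {d : ℕ}
    (X : Ω → Euc d) : ℝ :=
  ⨅ a : Euc d, (∫ ω, ‖X ω - a‖ ^ p ∂P) ^ (1 / p)

/-!
Write `u N` for the minimal `L^r`-distortion at level `N` and put `t = r + d`. Two estimates of the
decrement `u N - u (N + 1)` drive the proof, both expressed through a reference probability measure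
`ν` with density proportional to `(1 + ‖x‖)^(-q)` rather than through the law of `X`.

* Adding a `ν`-random point to an optimal grid `Γ N` lowers the distortion by at least a constant
  times the weighted distortion `A N = E[dist(X, Γ N)^t (1 + ‖X‖)^(-q)]`, hence
  `A N ≲ u N - u (N + 1)`. Since Hölder's inequality gives `u N ≲ A N ^ (r / t)`, this is the
  recursion `u N ^ (t / r) ≲ u N - u (N + 1)`, whose solutions are `O(N^(-r / d))`.
* Conversely, disjoint balls around the points of `Γ (N + 1)` share the mass of `ν`, so half of
  these points have a close neighbour in the grid. Erasing one of them at random costs at most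
  `(u (N + 1) + N^(-r / d)) / N` up to a constant, hence `u N - u (N + 1) ≲ N^(-1 - r / d)`.

Together `A N ≲ N^(-t / d)`, and Hölder's inequality with exponent `s < t` gives the rate
`N^(-s / d)` for the `L^s`-distortion. The condition on `r'` is what makes a weight exponent `q > d`
possible with only moments of order `r'` entering. The constants are uniform over the `X` with
`E‖X‖^r' ≤ 1`; translation and dilation reduce to this case.
-/

open Metric

section RealInequalities

lemma add_rpow_le_two_rpow_mul {a b p : ℝ} (ha : 0 ≤ a) (hb : 0 ≤ b) (hp : 0 ≤ p) :
    (a + b) ^ p ≤ 2 ^ p * (a ^ p + b ^ p) := by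
  lift a to NNReal using ha
  lift b to NNReal using hb
  have h := ENNReal.add_rpow_le_two_rpow_mul_rpow_add_rpow (a : ENNReal) b hp
  rw [← ENNReal.coe_ofNat] at h
  simp only [← ENNReal.coe_add, ← ENNReal.coe_rpow_of_nonneg _ hp, ← ENNReal.coe_mul] at h
  exact_mod_cast h

lemma rpow_mul_one_add_le_of_rpow_one_add_le {u v β C : ℝ} (hβ : 0 < β) (hC : 0 < C)
    (hu : 0 ≤ u) (hv : 0 ≤ v) (h : u ^ (1 + β) ≤ C * (u - v)) :
    v ^ β * (1 + β * (u ^ β / C)) ≤ u ^ β := by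
  set t := u ^ β / C with ht
  have ht0 : 0 ≤ t := by positivity
  have hvu : v ≤ u * exp (-t) := by
    have hut : u * t ≤ u - v := by
      rw [rpow_add' hu (by positivity), rpow_one] at h
      rwa [ht, ← mul_div_assoc, div_le_iff₀' hC]
    calc v ≤ u * (-t + 1) := by linarith
      _ ≤ u * exp (-t) := by gcongr; exact add_one_le_exp (-t)
  have hvβ : v ^ β ≤ u ^ β * exp (-(β * t)) := by
    calc v ^ β ≤ (u * exp (-t)) ^ β := by gcongr
      _ = u ^ β * exp (-(β * t)) := by
        rw [mul_rpow hu (exp_nonneg _), ← exp_mul]; ring_nf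
  calc v ^ β * (1 + β * t) ≤ v ^ β * exp (β * t) := by
        gcongr; linarith [add_one_le_exp (β * t)]
    _ ≤ u ^ β * exp (-(β * t)) * exp (β * t) := by gcongr
    _ = u ^ β := by rw [mul_assoc, ← exp_add]; simp

lemma natCast_mul_rpow_le_of_rpow_one_add_le {u : ℕ → ℝ} {β C L : ℝ} (hβ : 0 < β) (hC : 0 < C)
    (hu : ∀ N, 1 ≤ N → 0 ≤ u N) (hCL : C ≤ L * β) (huL : u 1 ^ β ≤ L)
    (hrec : ∀ N, 1 ≤ N → u N ^ (1 + β) ≤ C * (u N - u (N + 1))) {N : ℕ} (hN : 1 ≤ N) :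
    N * u N ^ β ≤ L := by
  induction N, hN using Nat.le_induction with
  | base => simpa using huL
  | succ N hN ih =>
    set x := u N ^ β
    have hx : 0 ≤ x := rpow_nonneg (hu N hN) β
    have hxL : x ≤ L * (β * (x / C)) := by
      calc x = C * (x / C) := by field_simp
        _ ≤ L * β * (x / C) := by gcongr
        _ = L * (β * (x / C)) := mul_assoc _ _ _
    have hstep := rpow_mul_one_add_le_of_rpow_one_add_le hβ hC (hu N hN)
      (hu (N + 1) (by lia)) (hrec N hN)
    have hpos : 0 < 1 + β * (x / C) := by positivity
    refine le_of_mul_le_mul_right ?_ hpos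
    calc ((N + 1 : ℕ) : ℝ) * u (N + 1) ^ β * (1 + β * (x / C))
        = (N + 1 : ℕ) * (u (N + 1) ^ β * (1 + β * (x / C))) := mul_assoc _ _ _
      _ ≤ (N + 1 : ℕ) * x := by gcongr
      _ = N * x + x := by push_cast; ring
      _ ≤ L * (1 + β * (x / C)) := by linarith

lemma le_rpow_mul_rpow_of_rpow_one_add_le {u : ℕ → ℝ} {β C L : ℝ} (hβ : 0 < β) (hC : 0 < C)
    (hu : ∀ N, 1 ≤ N → 0 ≤ u N) (hCL : C ≤ L * β) (huL : u 1 ^ β ≤ L)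
    (hrec : ∀ N, 1 ≤ N → u N ^ (1 + β) ≤ C * (u N - u (N + 1))) {N : ℕ} (hN : 1 ≤ N) :
    u N ≤ L ^ β⁻¹ * (N : ℝ) ^ (-β⁻¹) := by
  have hN0 : (0 : ℝ) < N := by exact_mod_cast hN
  have huN := hu N hN
  have hL : 0 ≤ L := (rpow_nonneg (hu 1 le_rfl) β).trans huL
  have hpow : u N ^ β ≤ L / N :=
    (le_div_iff₀' hN0).2 (natCast_mul_rpow_le_of_rpow_one_add_le hβ hC hu hCL huL hrec hN)
  calc u N = (u N ^ β) ^ β⁻¹ := (rpow_rpow_inv huN hβ.ne').symm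
    _ ≤ (L / N) ^ β⁻¹ := by gcongr
    _ = L ^ β⁻¹ * (N : ℝ) ^ (-β⁻¹) := by
      rw [div_rpow hL hN0.le, rpow_neg hN0.le, div_eq_mul_inv]

lemma rpow_one_add_div_le_of_le_rpow_mul_rpow {r d u A M : ℝ} (hr : 0 < r) (hd : 0 < d)
    (hu : 0 ≤ u) (hA : 0 ≤ A) (hM : 0 ≤ M)
    (h : u ≤ A ^ (r / (r + d)) * M ^ (d / (r + d))) : u ^ (1 + d / r) ≤ A * M ^ (d / r) := by
  have hA_exp : r / (r + d) * (1 + d / r) = 1 := by field_simp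
  have hM_exp : d / (r + d) * (1 + d / r) = d / r := by field_simp
  calc u ^ (1 + d / r) ≤ (A ^ (r / (r + d)) * M ^ (d / (r + d))) ^ (1 + d / r) := by gcongr
    _ = A * M ^ (d / r) := by
      rw [mul_rpow (by positivity) (by positivity), ← rpow_mul hA, ← rpow_mul hM, hA_exp, hM_exp,
        rpow_one]

lemma exists_forall_le_mul_rpow_of_increment_bounds {r d C₁ C₂ M : ℝ} (hr : 0 < r) (hd : 0 < d)
    (hC₁ : 0 < C₁) (hC₂ : 0 < C₂) (hM : 0 < M) :
    ∃ C, 0 < C ∧ ∀ u A : ℕ → ℝ, (∀ N, 0 ≤ u N) → (∀ N, 0 ≤ A N) → u 1 ≤ M →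
      (∀ N, 1 ≤ N → u N ≤ A N ^ (r / (r + d)) * M ^ (d / (r + d))) →
      (∀ N, 1 ≤ N → A N ≤ C₁ * (u N - u (N + 1))) →
      (∀ N, 1 ≤ N → N * (u N - u (N + 1)) ≤ C₂ * (u (N + 1) + (N : ℝ) ^ (-(r / d)))) →
      ∀ N, 1 ≤ N → A N ≤ C * (N : ℝ) ^ (-((r + d) / d)) := by
  set L := max (M ^ (d / r)) (C₁ * M ^ (d / r) / (d / r))
  have : 0 < L := lt_max_of_lt_left (by positivity)
  refine ⟨C₁ * (C₂ * (L ^ (r / d) + 1)), by positivity, ?_⟩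
  intro u A hu hA huM hholder hgain hloss N hN
  have hN0 : (0 : ℝ) < N := by exact_mod_cast hN
  have hrate : u (N + 1) ≤ L ^ (r / d) * (N : ℝ) ^ (-(r / d)) := by
    have hrec (n : ℕ) (hn : 1 ≤ n) :
        u n ^ (1 + d / r) ≤ C₁ * M ^ (d / r) * (u n - u (n + 1)) := by
      calc u n ^ (1 + d / r) ≤ A n * M ^ (d / r) :=
            rpow_one_add_div_le_of_le_rpow_mul_rpow hr hd (hu n) (hA n) hM.le (hholder n hn)
        _ ≤ C₁ * (u n - u (n + 1)) * M ^ (d / r) := by gcongr; exact hgain n hn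
        _ = C₁ * M ^ (d / r) * (u n - u (n + 1)) := by ring
    have hanti : u (N + 1) ≤ u N :=
      sub_nonneg.1 (nonneg_of_mul_nonneg_right ((hA N).trans (hgain N hN)) hC₁)
    rw [← inv_div d r]
    exact hanti.trans <| le_rpow_mul_rpow_of_rpow_one_add_le (by positivity) (by positivity)
      (fun n _ => hu n) ((div_le_iff₀ (by positivity)).1 (le_max_right _ _))
      ((rpow_le_rpow (hu 1) huM (by positivity)).trans (le_max_left _ _)) hrec hN
  have hexp : (N : ℝ) ^ (-((r + d) / d)) = (N : ℝ) ^ (-(r / d)) / N := by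
    rw [← rpow_sub_one hN0.ne']
    congr 1
    field_simp
    ring
  rw [hexp, ← mul_div_assoc, le_div_iff₀ hN0]
  calc A N * N ≤ C₁ * (u N - u (N + 1)) * N := by gcongr; exact hgain N hN
    _ = C₁ * (N * (u N - u (N + 1))) := by ring
    _ ≤ C₁ * (C₂ * (u (N + 1) + (N : ℝ) ^ (-(r / d)))) :=
        mul_le_mul_of_nonneg_left (hloss N hN) hC₁.le
    _ ≤ C₁ * (C₂ * (L ^ (r / d) * (N : ℝ) ^ (-(r / d)) + (N : ℝ) ^ (-(r / d)))) := by gcongr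
    _ = C₁ * (C₂ * (L ^ (r / d) + 1)) * (N : ℝ) ^ (-(r / d)) := by ring

lemma rpow_le_mul_rpow_of_mul_rpow_neg_le {ρ w b c d q r : ℝ} (hd : 0 < d) (hr : 0 ≤ r) (hc : 0 < c)
    (hρ : 0 ≤ ρ) (hw : 0 < w) (hb : 0 ≤ b) (h : c * (ρ ^ d * w ^ (-q)) ≤ b) :
    ρ ^ r ≤ (b / c) ^ (r / d) * w ^ (q * (r / d)) := by
  have hρd : ρ ^ d ≤ b / c * w ^ q := by
    rw [rpow_neg hw.le, ← div_eq_mul_inv] at h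
    rwa [← div_le_iff₀ (by positivity), le_div_iff₀' hc]
  calc ρ ^ r = (ρ ^ d) ^ (r / d) := by rw [← rpow_mul hρ, mul_div_cancel₀ r hd.ne']
    _ ≤ (b / c * w ^ q) ^ (r / d) := by gcongr
    _ = (b / c) ^ (r / d) * w ^ (q * (r / d)) := by
      rw [mul_rpow (by positivity) (by positivity), ← rpow_mul hw.le]

lemma card_le_two_mul_card_filter_le {ι : Type*} {s : Finset ι} {f : ι → ℝ} {C : ℝ}
    (hf : ∀ i ∈ s, 0 ≤ f i) (hC : 0 < C) (hsum : ∑ i ∈ s, f i ≤ C) :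
    (s.card : ℝ) ≤ 2 * (s.filter fun i => f i ≤ 2 * C / s.card).card := by
  rcases s.eq_empty_or_nonempty with rfl | hs
  · simp
  have hs0 : (0 : ℝ) < s.card := by exact_mod_cast hs.card_pos
  have hmarkov : ((s.filter fun i => ¬f i ≤ 2 * C / s.card).card : ℝ) * (2 * C / s.card) ≤ C := by
    calc ((s.filter fun i => ¬f i ≤ 2 * C / s.card).card : ℝ) * (2 * C / s.card)
        ≤ ∑ i ∈ s.filter fun i => ¬f i ≤ 2 * C / s.card, f i := by
          rw [← nsmul_eq_mul]
          exact Finset.card_nsmul_le_sum _ f _ fun i hi => (not_le.1 (Finset.mem_filter.1 hi).2).le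
      _ ≤ ∑ i ∈ s, f i :=
          Finset.sum_le_sum_of_subset_of_nonneg (Finset.filter_subset _ _) fun i hi _ => hf i hi
      _ ≤ C := hsum
  have hhalf : ((s.filter fun i => ¬f i ≤ 2 * C / s.card).card : ℝ) * 2 ≤ s.card := by
    rw [← mul_div_assoc, div_le_iff₀ hs0] at hmarkov
    nlinarith
  have hsplit : ((s.filter fun i => f i ≤ 2 * C / s.card).card : ℝ) +
      (s.filter fun i => ¬f i ≤ 2 * C / s.card).card = s.card := by
    exact_mod_cast Finset.card_filter_add_card_filter_not (s := s) fun i => f i ≤ 2 * C / s.card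
  linarith

end RealInequalities

section Distortion

variable {Ω E : Type*} [MeasurableSpace Ω] [PseudoMetricSpace E]

/-- The `L^p`-distortion `E[dist(X, Γ)^p]` of a grid, i.e. the `p`-th power of the quantization
error `e_p(Γ, X)`. -/
def distortion (p : ℝ) (P : Measure Ω) (X : Ω → E) (Γ : Finset E) : ℝ :=
  ∫ ω, infDist (X ω) Γ ^ p ∂P

/-- `Γ` is an `L^p`-optimal quantizer of `X` at level `N`. Optimality is expressed through the
distortion, which for `0 < p` is minimal exactly when the quantization error is. -/
structure IsOptimalQuantizer (p : ℝ) (P : Measure Ω) (X : Ω → E) (N : ℕ) (Γ : Finset E) :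
    Prop where
  nonempty : Γ.Nonempty
  card_le : Γ.card ≤ N
  distortion_le (Γ' : Finset E) :
    Γ'.Nonempty → Γ'.card ≤ N → distortion p P X Γ ≤ distortion p P X Γ'

variable {p : ℝ} {P : Measure Ω} {X : Ω → E} {N : ℕ} {Γ Γ' : Finset E}

lemma distortion_nonneg : 0 ≤ distortion p P X Γ :=
  integral_nonneg fun _ => rpow_nonneg infDist_nonneg p

lemma IsOptimalQuantizer.distortion_le_distortion_insert [DecidableEq E]
    (hΓ' : IsOptimalQuantizer p P X (N + 1) Γ') (hΓ : Γ.card ≤ N) (y : E) :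
    distortion p P X Γ' ≤ distortion p P X (insert y Γ) :=
  hΓ'.distortion_le _ (Finset.insert_nonempty y Γ) ((Finset.card_insert_le y Γ).trans (by lia))

lemma IsOptimalQuantizer.distortion_le_distortion_erase [DecidableEq E]
    (hΓ : IsOptimalQuantizer p P X N Γ) (hN : 1 ≤ N) (hcard : Γ'.card = N + 1) {a : E}
    (ha : a ∈ Γ') : distortion p P X Γ ≤ distortion p P X (Γ'.erase a) := by
  have hcard_erase : (Γ'.erase a).card = N := by simp [Finset.card_erase_of_mem ha, hcard]
  exact hΓ.distortion_le _ (Finset.card_pos.1 (by lia)) hcard_erase.le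

end Distortion

section Insertion

variable {Ω E : Type*} [MeasurableSpace Ω] [PseudoMetricSpace E]

lemma infDist_insert {s : Set E} (hs : s.Nonempty) (x y : E) :
    infDist x (insert y s) = min (dist x y) (infDist x s) := by
  rw [infDist, Set.insert_eq, infEDist_union, infEDist_singleton,
    ENNReal.toReal_min (edist_ne_top x y) (infEDist_ne_top hs), ← dist_edist, infDist]

lemma infDist_insert_rpow_le [DecidableEq E] {r : ℝ} (hr : 0 ≤ r) {Γ : Finset E}
    (hΓ : Γ.Nonempty) (x y : E) : infDist x (insert y Γ : Finset E) ^ r ≤ infDist x Γ ^ r := by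
  refine rpow_le_rpow infDist_nonneg (infDist_le_infDist_of_subset ?_ hΓ) hr
  exact_mod_cast Finset.subset_insert y Γ

lemma norm_infDist_rpow_sub_infDist_insert_rpow_le [DecidableEq E] {r : ℝ} (hr : 0 ≤ r)
    {Γ : Finset E} (hΓ : Γ.Nonempty) (x y : E) :
    ‖infDist x Γ ^ r - infDist x (insert y Γ : Finset E) ^ r‖ ≤ infDist x Γ ^ r := by
  rw [norm_of_nonneg (sub_nonneg.2 (infDist_insert_rpow_le hr hΓ x y))]
  exact sub_le_self _ (rpow_nonneg infDist_nonneg r)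

variable [MeasurableSpace E] [BorelSpace E] {r : ℝ} {ν : Measure E} {Γ : Finset E}

lemma integrable_infDist_rpow_sub_infDist_insert_rpow [DecidableEq E] [IsFiniteMeasure ν]
    (hr : 0 ≤ r) (hΓ : Γ.Nonempty) (x : E) :
    Integrable (fun y => infDist x Γ ^ r - infDist x (insert y Γ : Finset E) ^ r) ν := by
  refine .of_bound ?_ _ (.of_forall (norm_infDist_rpow_sub_infDist_insert_rpow_le hr hΓ x))
  simp only [Finset.coe_insert, infDist_insert hΓ]
  exact Measurable.aestronglyMeasurable (by fun_prop)

lemma mul_measureReal_closedBall_le_integral_infDist_rpow_sub [DecidableEq E] [IsFiniteMeasure ν]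
    (hr : 0 ≤ r) (hΓ : Γ.Nonempty) (x : E) :
    (1 - 2⁻¹ ^ r) * infDist x Γ ^ r * ν.real (closedBall x (infDist x Γ / 2)) ≤
      ∫ y, (infDist x Γ ^ r - infDist x (insert y Γ : Finset E) ^ r) ∂ν := by
  have hint := integrable_infDist_rpow_sub_infDist_insert_rpow (ν := ν) hr hΓ x
  calc (1 - 2⁻¹ ^ r) * infDist x Γ ^ r * ν.real (closedBall x (infDist x Γ / 2))
      = ∫ _ in closedBall x (infDist x Γ / 2), (1 - 2⁻¹ ^ r) * infDist x Γ ^ r ∂ν := by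
        rw [setIntegral_const, smul_eq_mul, mul_comm]
    _ ≤ ∫ y in closedBall x (infDist x Γ / 2),
          (infDist x Γ ^ r - infDist x (insert y Γ : Finset E) ^ r) ∂ν := by
        refine setIntegral_mono_on (integrable_const _) hint.integrableOn
          measurableSet_closedBall fun y hy => ?_
        have hnear : infDist x (insert y Γ : Finset E) ≤ 2⁻¹ * infDist x Γ := by
          rw [Finset.coe_insert, infDist_insert hΓ]
          exact (min_le_left _ _).trans (by linarith [mem_closedBall'.1 hy])
        have hpow := rpow_le_rpow infDist_nonneg hnear hr
        rw [mul_rpow (by positivity) infDist_nonneg] at hpow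
        linarith
    _ ≤ ∫ y, (infDist x Γ ^ r - infDist x (insert y Γ : Finset E) ^ r) ∂ν :=
        setIntegral_le_integral hint <| .of_forall fun y =>
          sub_nonneg.2 (infDist_insert_rpow_le hr hΓ x y)

variable [SecondCountableTopology E] {P : Measure Ω} {X : Ω → E}

lemma integrable_prod_infDist_rpow_sub_infDist_insert_rpow [DecidableEq E] [SFinite P]
    [IsFiniteMeasure ν] (hX : AEMeasurable X P) (hr : 0 ≤ r) (hΓ : Γ.Nonempty)
    (hint : Integrable (fun ω => infDist (X ω) Γ ^ r) P) :
    Integrable (fun z : Ω × E =>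
      infDist (X z.1) Γ ^ r - infDist (X z.1) (insert z.2 Γ : Finset E) ^ r) (P.prod ν) := by
  refine (hint.comp_fst ν).mono' ?_ <| .of_forall fun z =>
    norm_infDist_rpow_sub_infDist_insert_rpow_le hr hΓ (X z.1) z.2
  have : AEMeasurable (fun z : Ω × E => X z.1) (P.prod ν) := hX.comp_fst
  simp only [Finset.coe_insert, infDist_insert hΓ]
  exact AEMeasurable.aestronglyMeasurable (by fun_prop)

/- Insert a `ν`-random point `y`: on average over `y`, the decrease of the distortion is at most
`distortion r P X Γ - T`, while a point `y` falling within `dist(x, Γ) / 2` of `x` divides the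
distance of `x` to the grid by at least two. -/
lemma mul_integral_infDist_rpow_mul_le_distortion_sub [DecidableEq E] [IsFiniteMeasure P]
    [IsProbabilityMeasure ν] (hX : AEMeasurable X P) (hr : 0 ≤ r) (hΓ : Γ.Nonempty)
    (hint : Integrable (fun ω => infDist (X ω) Γ ^ r) P) {T : ℝ}
    (hT : ∀ y, T ≤ distortion r P X (insert y Γ)) {φ : E → ℝ} (hφ0 : ∀ x, 0 ≤ φ x)
    (hφ : ∀ x, φ x ≤ ν.real (closedBall x (infDist x Γ / 2))) :
    (1 - 2⁻¹ ^ r) * ∫ ω, infDist (X ω) Γ ^ r * φ (X ω) ∂P ≤ distortion r P X Γ - T := by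
  set gain : Ω → E → ℝ := fun ω y =>
    infDist (X ω) Γ ^ r - infDist (X ω) (insert y Γ : Finset E) ^ r
  have hgain : Integrable (Function.uncurry gain) (P.prod ν) :=
    integrable_prod_infDist_rpow_sub_infDist_insert_rpow hX hr hΓ hint
  have hhalf : 0 ≤ 1 - (2⁻¹ : ℝ) ^ r :=
    sub_nonneg.2 (rpow_le_one (by norm_num) (by norm_num) hr)
  have hpoint (ω : Ω) :
      (1 - 2⁻¹ ^ r) * (infDist (X ω) Γ ^ r * φ (X ω)) ≤ ∫ y, gain ω y ∂ν := by
    refine le_trans ?_ (mul_measureReal_closedBall_le_integral_infDist_rpow_sub hr hΓ (X ω))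
    rw [mul_assoc]
    gcongr
    exacts [rpow_nonneg infDist_nonneg r, hφ (X ω)]
  have hinsert (y : E) : ∫ ω, gain ω y ∂P ≤ distortion r P X Γ - T := by
    have hint_insert : Integrable (fun ω => infDist (X ω) (insert y Γ : Finset E) ^ r) P := by
      refine hint.mono' (AEMeasurable.aestronglyMeasurable (by fun_prop)) (.of_forall fun ω => ?_)
      rw [norm_of_nonneg (rpow_nonneg infDist_nonneg r)]
      exact infDist_insert_rpow_le hr hΓ (X ω) y
    rw [integral_sub hint hint_insert]
    exact sub_le_sub_left (hT y) _
  calc (1 - 2⁻¹ ^ r) * ∫ ω, infDist (X ω) Γ ^ r * φ (X ω) ∂P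
      = ∫ ω, (1 - 2⁻¹ ^ r) * (infDist (X ω) Γ ^ r * φ (X ω)) ∂P := (integral_const_mul _ _).symm
    _ ≤ ∫ ω, ∫ y, gain ω y ∂ν ∂P := by
        refine integral_mono_of_nonneg (.of_forall fun ω => ?_) hgain.integral_prod_left
          (.of_forall hpoint)
        exact mul_nonneg hhalf (mul_nonneg (rpow_nonneg infDist_nonneg r) (hφ0 _))
    _ = ∫ y, ∫ ω, gain ω y ∂P ∂ν := integral_integral_swap hgain
    _ ≤ ∫ _, (distortion r P X Γ - T) ∂ν :=
        integral_mono hgain.integral_prod_right (integrable_const _) hinsert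
    _ = distortion r P X Γ - T := by simp

end Insertion

section Deletion

variable {Ω E : Type*}

lemma sum_infDist_erase_rpow_sub_le [PseudoMetricSpace E] [DecidableEq E] {r : ℝ} (hr : 0 ≤ r)
    {Γ S : Finset E} {x b : E} (hb : b ∈ Γ) (hxb : infDist x Γ = dist x b) {H : ℝ} (hH : 0 ≤ H)
    (hbH : b ∈ S → infDist b (Γ.erase b) ^ r ≤ H) :
    ∑ a ∈ S, (infDist x (Γ.erase a) ^ r - infDist x Γ ^ r) ≤ 2 ^ r * (infDist x Γ ^ r + H) := by
  have hother (a : E) (hab : a ≠ b) : infDist x (Γ.erase a) ^ r - infDist x Γ ^ r ≤ 0 := by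
    rw [sub_nonpos, hxb]
    exact rpow_le_rpow infDist_nonneg
      (infDist_le_dist_of_mem (Finset.mem_coe.2 (Finset.mem_erase.2 ⟨hab.symm, hb⟩))) hr
  have hD : 0 ≤ infDist x Γ ^ r := rpow_nonneg infDist_nonneg r
  by_cases hbS : b ∈ S
  · have hnear : infDist x (Γ.erase b) ≤ infDist x Γ + infDist b (Γ.erase b) := by
      rw [hxb, add_comm]
      exact infDist_le_infDist_add_dist
    calc ∑ a ∈ S, (infDist x (Γ.erase a) ^ r - infDist x Γ ^ r)
        ≤ infDist x (Γ.erase b) ^ r - infDist x Γ ^ r := by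
          rw [← Finset.add_sum_erase _ _ hbS]
          exact add_le_of_nonpos_right <|
            Finset.sum_nonpos fun a ha => hother a (Finset.ne_of_mem_erase ha)
      _ ≤ infDist x (Γ.erase b) ^ r := sub_le_self _ hD
      _ ≤ (infDist x Γ + infDist b (Γ.erase b)) ^ r := rpow_le_rpow infDist_nonneg hnear hr
      _ ≤ 2 ^ r * (infDist x Γ ^ r + infDist b (Γ.erase b) ^ r) :=
          add_rpow_le_two_rpow_mul infDist_nonneg infDist_nonneg hr
      _ ≤ 2 ^ r * (infDist x Γ ^ r + H) := by gcongr; exact hbH hbS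
  · exact (Finset.sum_nonpos fun a ha => hother a (ne_of_mem_of_not_mem ha hbS)).trans
      (by positivity)

lemma sum_measureReal_closedBall_infDist_erase_le [MetricSpace E] [DecidableEq E]
    [MeasurableSpace E] [OpensMeasurableSpace E] {ν : Measure E} [IsProbabilityMeasure ν]
    (Γ : Finset E) : ∑ a ∈ Γ, ν.real (closedBall a (infDist a (Γ.erase a) / 3)) ≤ 1 := by
  have hsep {a b : E} (hb : b ∈ Γ) (hab : a ≠ b) : infDist a (Γ.erase a) ≤ dist a b :=
    infDist_le_dist_of_mem (Finset.mem_coe.2 (Finset.mem_erase.2 ⟨hab.symm, hb⟩))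
  have hdisj : Set.PairwiseDisjoint (Γ : Set E) fun a =>
      closedBall a (infDist a (Γ.erase a) / 3) := by
    intro a ha b hb hab
    refine closedBall_disjoint_closedBall ?_
    linarith [hsep hb hab, hsep ha hab.symm, dist_comm a b, dist_pos.2 hab]
  rw [← measureReal_biUnion_finset hdisj fun a _ => measurableSet_closedBall]
  exact measureReal_le_one

variable [PseudoMetricSpace E] [MeasurableSpace Ω] {P : Measure Ω} {X : Ω → E}

lemma card_mul_sub_distortion_le_integral [DecidableEq E] {r : ℝ} {Γ S : Finset E} {T : ℝ}
    (hint : ∀ Γ' : Finset E, Integrable (fun ω => infDist (X ω) Γ' ^ r) P)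
    (hT : ∀ a ∈ S, T ≤ distortion r P X (Γ.erase a)) :
    S.card * (T - distortion r P X Γ) ≤
      ∫ ω, ∑ a ∈ S, (infDist (X ω) (Γ.erase a) ^ r - infDist (X ω) Γ ^ r) ∂P := by
  calc S.card * (T - distortion r P X Γ)
      ≤ ∑ a ∈ S, (distortion r P X (Γ.erase a) - distortion r P X Γ) := by
        rw [← nsmul_eq_mul]
        exact Finset.card_nsmul_le_sum _ _ _ fun a ha => sub_le_sub_right (hT a ha) _
    _ = ∫ ω, ∑ a ∈ S, (infDist (X ω) (Γ.erase a) ^ r - infDist (X ω) Γ ^ r) ∂P := by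
        refine Eq.symm ((integral_finsetSum S fun a _ => (hint (Γ.erase a)).sub (hint Γ)).trans ?_)
        exact Finset.sum_congr rfl fun a _ => integral_sub (hint _) (hint _)

end Deletion

section Moments

variable {Ω : Type*} [MeasurableSpace Ω] {P : Measure Ω}

lemma integrable_rpow_of_memLp [IsFiniteMeasure P] {f : Ω → ℝ} {m q : ℝ} (hm : 0 ≤ m)
    (hmq : m ≤ q) (hf0 : ∀ ω, 0 ≤ f ω) (hf : MemLp f (ENNReal.ofReal q) P) :
    Integrable (fun ω => f ω ^ m) P := by
  have hint := (hf.mono_exponent (ENNReal.ofReal_le_ofReal hmq)).integrable_norm_rpow'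
  simpa only [norm_of_nonneg (hf0 _), ENNReal.toReal_ofReal hm] using hint

lemma memLp_of_integrable_rpow {f : Ω → ℝ} {p : ℝ} (hp : 0 < p) (hfm : AEMeasurable f P)
    (hf0 : ∀ ω, 0 ≤ f ω) (hf : Integrable (fun ω => f ω ^ p) P) :
    MemLp f (ENNReal.ofReal p) P := by
  rw [← integrable_norm_rpow_iff hfm.aestronglyMeasurable (by simpa using hp)
    ENNReal.ofReal_ne_top, ENNReal.toReal_ofReal hp.le]
  simpa only [norm_of_nonneg (hf0 _)] using hf

lemma integral_rpow_le_integral_rpow_mul_rpow_neg {f g : Ω → ℝ} {p q t : ℝ} (hp : 0 < p)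
    (hpt : p < t) (hf : ∀ ω, 0 ≤ f ω) (hg : ∀ ω, 0 < g ω) (hfm : AEMeasurable f P)
    (hgm : AEMeasurable g P) (hfint : Integrable (fun ω => f ω ^ t * g ω ^ (-q)) P)
    (hgint : Integrable (fun ω => g ω ^ (q * (p / (t - p)))) P) :
    ∫ ω, f ω ^ p ∂P ≤ (∫ ω, f ω ^ t * g ω ^ (-q) ∂P) ^ (p / t) *
      (∫ ω, g ω ^ (q * (p / (t - p))) ∂P) ^ ((t - p) / t) := by
  have ht : 0 < t := hp.trans hpt
  have : 0 < t - p := sub_pos.2 hpt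
  have hconj : (t / p).HolderConjugate (t / (t - p)) := by
    rw [holderConjugate_iff]
    exact ⟨(one_lt_div hp).2 hpt, by field_simp; ring⟩
  have hF0 (ω : Ω) : 0 ≤ f ω ^ t * g ω ^ (-q) :=
    mul_nonneg (rpow_nonneg (hf ω) t) (rpow_nonneg (hg ω).le _)
  have hF (ω : Ω) : ((f ω ^ t * g ω ^ (-q)) ^ (p / t)) ^ (t / p) = f ω ^ t * g ω ^ (-q) := by
    rw [← rpow_mul (hF0 ω), div_mul_div_cancel₀ ht.ne', div_self hp.ne', rpow_one]
  have hG (ω : Ω) : (g ω ^ (q * (p / t))) ^ (t / (t - p)) = g ω ^ (q * (p / (t - p))) := by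
    rw [← rpow_mul (hg ω).le, mul_assoc, div_mul_div_cancel₀ ht.ne']
  have hFG (ω : Ω) : (f ω ^ t * g ω ^ (-q)) ^ (p / t) * g ω ^ (q * (p / t)) = f ω ^ p := by
    rw [mul_rpow (rpow_nonneg (hf ω) t) (rpow_nonneg (hg ω).le _), ← rpow_mul (hf ω),
      ← rpow_mul (hg ω).le, mul_assoc, ← rpow_add (hg ω), mul_div_cancel₀ _ ht.ne', neg_mul,
      neg_add_cancel, rpow_zero, mul_one]
  have hholder := integral_mul_le_Lp_mul_Lq_of_nonneg (μ := P) hconj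
    (.of_forall fun ω => rpow_nonneg (hF0 ω) (p / t))
    (.of_forall fun ω => rpow_nonneg (hg ω).le (q * (p / t)))
    (memLp_of_integrable_rpow hconj.pos (by fun_prop) (fun ω => rpow_nonneg (hF0 ω) _)
      (by simpa only [hF] using hfint))
    (memLp_of_integrable_rpow hconj.symm.pos (by fun_prop) (fun ω => rpow_nonneg (hg ω).le _)
      (by simpa only [hG] using hgint))
  simpa only [hF, hG, hFG, one_div_div] using hholder

variable {E : Type*} [NormedAddCommGroup E] {X : Ω → E} {m q : ℝ}

lemma memLp_infDist [IsFiniteMeasure P] {p : ENNReal} (hX : MemLp X p P) (s : Set E) :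
    MemLp (fun ω => infDist (X ω) s) p P := by
  rcases s.eq_empty_or_nonempty with rfl | ⟨a, ha⟩
  · simp
  refine (hX.norm.add (memLp_const ‖a‖)).of_le
    ((continuous_infDist_pt s).comp_aestronglyMeasurable hX.1) (.of_forall fun ω => ?_)
  calc ‖infDist (X ω) s‖ = infDist (X ω) s := norm_of_nonneg infDist_nonneg
    _ ≤ ‖X ω - a‖ := (infDist_le_dist_of_mem ha).trans_eq (dist_eq_norm _ _)
    _ ≤ ‖X ω‖ + ‖a‖ := norm_sub_le _ _
    _ ≤ ‖‖X ω‖ + ‖a‖‖ := le_norm_self _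

lemma integrable_infDist_rpow [IsFiniteMeasure P] (hm : 0 ≤ m) (hmq : m ≤ q)
    (hX : MemLp X (ENNReal.ofReal q) P) (s : Set E) :
    Integrable (fun ω => infDist (X ω) s ^ m) P :=
  integrable_rpow_of_memLp hm hmq (fun _ => infDist_nonneg) (memLp_infDist hX s)

lemma integrable_one_add_norm_rpow [IsFiniteMeasure P] (hm : 0 ≤ m) (hmq : m ≤ q)
    (hX : MemLp X (ENNReal.ofReal q) P) : Integrable (fun ω => (1 + ‖X ω‖) ^ m) P := by
  have hmem : MemLp (fun ω => 1 + ‖X ω‖) (ENNReal.ofReal q) P :=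
    (memLp_const (1 : ℝ)).add hX.norm
  exact integrable_rpow_of_memLp hm hmq (fun _ => by positivity) hmem

lemma integral_one_add_norm_rpow_mono [IsFiniteMeasure P] (hm : 0 ≤ m) (hmq : m ≤ q)
    (hX : MemLp X (ENNReal.ofReal q) P) :
    ∫ ω, (1 + ‖X ω‖) ^ m ∂P ≤ ∫ ω, (1 + ‖X ω‖) ^ q ∂P :=
  integral_mono (integrable_one_add_norm_rpow hm hmq hX)
    (integrable_one_add_norm_rpow (hm.trans hmq) le_rfl hX) fun ω =>
      rpow_le_rpow_of_exponent_le (le_add_of_nonneg_right (norm_nonneg (X ω))) hmq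

lemma integral_norm_rpow_le_integral_one_add_norm_rpow [IsFiniteMeasure P] (hm : 0 ≤ m)
    (hmq : m ≤ q) (hX : MemLp X (ENNReal.ofReal q) P) :
    ∫ ω, ‖X ω‖ ^ m ∂P ≤ ∫ ω, (1 + ‖X ω‖) ^ q ∂P :=
  (integral_mono (integrable_rpow_of_memLp hm hmq (fun ω => norm_nonneg (X ω)) hX.norm)
    (integrable_one_add_norm_rpow hm hmq hX) fun ω =>
      rpow_le_rpow (norm_nonneg (X ω)) (le_add_of_nonneg_left zero_le_one) hm).trans
    (integral_one_add_norm_rpow_mono hm hmq hX)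

lemma integral_one_add_norm_rpow_le_of_integral_norm_rpow_le_one [IsProbabilityMeasure P]
    (hq : 0 ≤ q) (hX : MemLp X (ENNReal.ofReal q) P) (hX1 : ∫ ω, ‖X ω‖ ^ q ∂P ≤ 1) :
    ∫ ω, (1 + ‖X ω‖) ^ q ∂P ≤ 2 ^ q * 2 := by
  have hint : Integrable (fun ω => ‖X ω‖ ^ q) P :=
    integrable_rpow_of_memLp hq le_rfl (fun ω => norm_nonneg (X ω)) hX.norm
  calc ∫ ω, (1 + ‖X ω‖) ^ q ∂P ≤ ∫ ω, 2 ^ q * (1 + ‖X ω‖ ^ q) ∂P := by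
        refine integral_mono (integrable_one_add_norm_rpow hq le_rfl hX)
          (((integrable_const 1).add hint).const_mul _) fun ω => ?_
        simpa using add_rpow_le_two_rpow_mul zero_le_one (norm_nonneg (X ω)) hq
    _ = 2 ^ q * (1 + ∫ ω, ‖X ω‖ ^ q ∂P) := by
        rw [integral_const_mul, integral_add (integrable_const 1) hint]
        simp
    _ ≤ 2 ^ q * 2 := by gcongr; linarith

lemma distortion_singleton_zero (p : ℝ) :
    distortion p P X {0} = ∫ ω, ‖X ω‖ ^ p ∂P := by
  simp [distortion]

lemma exists_norm_le_of_distortion_le_distortion_zero [IsProbabilityMeasure P] {r M : ℝ}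
    (hr : 0 < r) (hX : MemLp X (ENNReal.ofReal r) P) (hM : ∫ ω, ‖X ω‖ ^ r ∂P ≤ M) {Γ : Finset E}
    (hne : Γ.Nonempty) (hΓ : distortion r P X Γ ≤ distortion r P X {0}) :
    ∃ a ∈ Γ, ‖a‖ ≤ (2 ^ r * (2 * M)) ^ r⁻¹ := by
  obtain ⟨a, ha, hmin⟩ := Γ.exists_min_image (‖·‖) hne
  refine ⟨a, ha, ?_⟩
  have hnorm : Integrable (fun ω => ‖X ω‖ ^ r) P :=
    integrable_rpow_of_memLp hr.le le_rfl (fun ω => norm_nonneg (X ω)) hX.norm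
  have hdist := integrable_infDist_rpow hr.le le_rfl hX (Γ : Set E)
  have hM0 : 0 ≤ M := (integral_nonneg fun ω => rpow_nonneg (norm_nonneg (X ω)) r).trans hM
  have hle (x : E) : ‖a‖ ≤ infDist x Γ + ‖x‖ := by
    rw [← sub_le_iff_le_add, le_infDist hne]
    intro y hy
    linarith [hmin y hy, norm_le_norm_add_norm_sub' y x, dist_eq_norm y x, dist_comm x y]
  rw [le_rpow_inv_iff_of_pos (norm_nonneg a) (by positivity) hr]
  calc ‖a‖ ^ r = ∫ _, ‖a‖ ^ r ∂P := by simp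
    _ ≤ ∫ ω, 2 ^ r * (infDist (X ω) Γ ^ r + ‖X ω‖ ^ r) ∂P :=
        integral_mono (integrable_const _) ((hdist.add hnorm).const_mul _) fun ω =>
          (rpow_le_rpow (norm_nonneg a) (hle (X ω)) hr.le).trans
            (add_rpow_le_two_rpow_mul infDist_nonneg (norm_nonneg _) hr.le)
    _ = 2 ^ r * (distortion r P X Γ + ∫ ω, ‖X ω‖ ^ r ∂P) := by
        rw [integral_const_mul, integral_add hdist hnorm, distortion]
    _ ≤ 2 ^ r * (2 * M) := by
        gcongr
        linarith [distortion_singleton_zero (P := P) (X := X) r]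

end Moments

section WeightedDistortion

variable {Ω E : Type*} [MeasurableSpace Ω] [NormedAddCommGroup E]

/-- The distortion of order `t` with respect to the finite measure `(1 + ‖X‖)^(-q) • P`. Hölder's
inequality trades it against a moment of `X` to bound the distortions of lower order. -/
def weightedDistortion (t q : ℝ) (P : Measure Ω) (X : Ω → E) (Γ : Finset E) : ℝ :=
  ∫ ω, infDist (X ω) Γ ^ t * (1 + ‖X ω‖) ^ (-q) ∂P

variable {m q t R : ℝ} {P : Measure Ω} {X : Ω → E} {Γ : Finset E} {a : E}

lemma weightedDistortion_nonneg : 0 ≤ weightedDistortion t q P X Γ :=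
  integral_nonneg fun _ => mul_nonneg (rpow_nonneg infDist_nonneg t) (by positivity)

lemma infDist_le_mul_one_add_norm (ha : a ∈ Γ) (haR : ‖a‖ ≤ R) (x : E) :
    infDist x Γ ≤ (1 + R) * (1 + ‖x‖) := by
  have hR : 0 ≤ R := (norm_nonneg a).trans haR
  calc infDist x Γ ≤ ‖x - a‖ :=
        (infDist_le_dist_of_mem (Finset.mem_coe.2 ha)).trans_eq (dist_eq_norm x a)
    _ ≤ ‖x‖ + ‖a‖ := norm_sub_le x a
    _ ≤ (1 + R) * (1 + ‖x‖) := by nlinarith [norm_nonneg x]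

lemma integrable_infDist_rpow_mul_one_add_norm_rpow_neg [IsFiniteMeasure P]
    (hX : MemLp X (ENNReal.ofReal m) P) (hm : 0 ≤ m) (ht : 0 ≤ t) (htm : t ≤ m + q) (ha : a ∈ Γ) :
    Integrable (fun ω => infDist (X ω) Γ ^ t * (1 + ‖X ω‖) ^ (-q)) P := by
  have hdist : AEMeasurable (fun ω => infDist (X ω) Γ) P := (memLp_infDist hX Γ).1.aemeasurable
  have hnorm : AEMeasurable (fun ω => ‖X ω‖) P := hX.1.norm.aemeasurable
  refine ((integrable_one_add_norm_rpow hm le_rfl hX).const_mul ((1 + ‖a‖) ^ t)).mono'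
    (AEMeasurable.aestronglyMeasurable (by fun_prop)) (.of_forall fun ω => ?_)
  have hD : 0 ≤ infDist (X ω) Γ := infDist_nonneg
  calc ‖infDist (X ω) Γ ^ t * (1 + ‖X ω‖) ^ (-q)‖
      = infDist (X ω) Γ ^ t * (1 + ‖X ω‖) ^ (-q) := norm_of_nonneg (by positivity)
    _ ≤ ((1 + ‖a‖) * (1 + ‖X ω‖)) ^ t * (1 + ‖X ω‖) ^ (-q) := by
        gcongr
        exact infDist_le_mul_one_add_norm ha le_rfl (X ω)
    _ = (1 + ‖a‖) ^ t * (1 + ‖X ω‖) ^ (t - q) := by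
        rw [mul_rpow (by positivity) (by positivity), mul_assoc, ← rpow_add (by positivity),
          sub_eq_add_neg]
    _ ≤ (1 + ‖a‖) ^ t * (1 + ‖X ω‖) ^ m := by
        gcongr
        · exact le_add_of_nonneg_right (norm_nonneg _)
        · linarith

lemma distortion_le_weightedDistortion_rpow_mul_rpow [IsFiniteMeasure P] {p M : ℝ}
    (hX : MemLp X (ENNReal.ofReal m) P) (hp : 0 < p) (hpt : p < t) (hq : 0 ≤ q)
    (hqm : q * (p / (t - p)) ≤ m) (htm : t ≤ m + q) (hM : ∫ ω, (1 + ‖X ω‖) ^ m ∂P ≤ M)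
    (hΓ : Γ.Nonempty) :
    distortion p P X Γ ≤ weightedDistortion t q P X Γ ^ (p / t) * M ^ ((t - p) / t) := by
  obtain ⟨a, ha⟩ := hΓ
  have ht : 0 < t := hp.trans hpt
  have : 0 < t - p := sub_pos.2 hpt
  have hexp : 0 ≤ q * (p / (t - p)) := by positivity
  calc distortion p P X Γ
      ≤ weightedDistortion t q P X Γ ^ (p / t) *
          (∫ ω, (1 + ‖X ω‖) ^ (q * (p / (t - p))) ∂P) ^ ((t - p) / t) :=
        integral_rpow_le_integral_rpow_mul_rpow_neg hp hpt (fun _ => infDist_nonneg)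
          (fun _ => by positivity) (memLp_infDist hX Γ).1.aemeasurable
          (hX.1.norm.aemeasurable.const_add 1)
          (integrable_infDist_rpow_mul_one_add_norm_rpow_neg hX (hexp.trans hqm) ht.le htm ha)
          (integrable_one_add_norm_rpow hexp hqm hX)
    _ ≤ weightedDistortion t q P X Γ ^ (p / t) * M ^ ((t - p) / t) := by
        gcongr
        · exact rpow_nonneg weightedDistortion_nonneg _
        · exact (integral_one_add_norm_rpow_mono hexp hqm hX).trans hM

end WeightedDistortion

section PolynomialBallMass

variable {E : Type*} [NormedAddCommGroup E] [MeasurableSpace E]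

/-- Lower bound `c ρ^d (1 + ‖x‖)^(-q)` for the mass of the closed ball of centre `x` and radius
`ρ`, required for the radii up to `B (1 + ‖x‖)`. Random insertion and packing only use the
reference measure through this bound. -/
def HasPolynomialBallMass (ν : Measure E) (d q B c : ℝ) : Prop :=
  ∀ x ρ, 0 ≤ ρ → ρ ≤ B * (1 + ‖x‖) →
    c * (ρ ^ d * (1 + ‖x‖) ^ (-q)) ≤ ν.real (closedBall x ρ)

variable [NormedSpace ℝ E] [FiniteDimensional ℝ E] [BorelSpace E]

lemma mul_rpow_le_setIntegral_closedBall_one_add_norm_rpow_neg (μ : Measure E)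
    [μ.IsAddHaarMeasure] {q B ρ : ℝ} (hq : Module.finrank ℝ E < q) {x : E} (hρ : 0 ≤ ρ)
    (hρB : ρ ≤ B * (1 + ‖x‖)) :
    (1 + B) ^ (-q) * μ.real (ball 0 1) *
        (ρ ^ (Module.finrank ℝ E : ℝ) * (1 + ‖x‖) ^ (-q)) ≤
      ∫ y in closedBall x ρ, (1 + ‖y‖) ^ (-q) ∂μ := by
  have hB : 0 ≤ B := nonneg_of_mul_nonneg_left (hρ.trans hρB) (by positivity)
  have hq0 : 0 ≤ q := (Nat.cast_nonneg _).trans hq.le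
  calc (1 + B) ^ (-q) * μ.real (ball 0 1) *
        (ρ ^ (Module.finrank ℝ E : ℝ) * (1 + ‖x‖) ^ (-q))
      = ∫ _ in closedBall x ρ, ((1 + B) * (1 + ‖x‖)) ^ (-q) ∂μ := by
        rw [setIntegral_const, Measure.addHaar_real_closedBall μ x hρ, smul_eq_mul,
          mul_rpow (by positivity) (by positivity), rpow_natCast]
        ring
    _ ≤ ∫ y in closedBall x ρ, (1 + ‖y‖) ^ (-q) ∂μ := by
        refine setIntegral_mono_on (integrableOn_const measure_closedBall_lt_top.ne)
          (integrable_one_add_norm hq).integrableOn measurableSet_closedBall fun y hy => ?_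
        refine rpow_le_rpow_of_nonpos (by positivity) ?_ (neg_nonpos.2 hq0)
        have hyx : ‖y‖ ≤ ‖x‖ + ρ := by
          linarith [norm_le_norm_add_norm_sub' y x, mem_closedBall_iff_norm.1 hy]
        linarith

lemma exists_hasPolynomialBallMass {q B : ℝ} (hq : Module.finrank ℝ E < q) (hB : 0 ≤ B) :
    ∃ ν : Measure E, IsProbabilityMeasure ν ∧
      ∃ c, 0 < c ∧ HasPolynomialBallMass ν (Module.finrank ℝ E) q B c := by
  let μ : Measure E := Measure.addHaar
  let ν : Measure E := μ.withDensity fun y => ENNReal.ofReal ((1 + ‖y‖) ^ (-q))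
  have hw : Integrable (fun y : E => (1 + ‖y‖) ^ (-q)) μ := integrable_one_add_norm hq
  have : IsFiniteMeasure ν := isFiniteMeasure_withDensity_ofReal hw.2
  have : NeZero ν := by
    refine ⟨fun hν => NeZero.ne μ (Measure.measure_univ_eq_zero.1 ?_)⟩
    simpa [rpow_pos_of_pos, add_pos_of_pos_of_nonneg, Function.support] using
      (withDensity_apply_eq_zero' (by fun_prop)).1 (Measure.measure_univ_eq_zero.2 hν)
  have : 0 < μ.real (ball 0 1) :=
    ENNReal.toReal_pos (measure_ball_pos μ 0 one_pos).ne' measure_ball_lt_top.ne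
  have hball (x : E) (ρ : ℝ) :
      ν.real (closedBall x ρ) = ∫ y in closedBall x ρ, (1 + ‖y‖) ^ (-q) ∂μ := by
    rw [measureReal_def, withDensity_apply _ measurableSet_closedBall,
      ← ofReal_integral_eq_lintegral_ofReal hw.integrableOn (.of_forall fun y => by positivity),
      ENNReal.toReal_ofReal (integral_nonneg fun y => by positivity)]
  refine ⟨(ν Set.univ)⁻¹ • ν, inferInstance,
    (ν.real Set.univ)⁻¹ * ((1 + B) ^ (-q) * μ.real (ball 0 1)), ?_, ?_⟩
  · have : 0 < ν.real Set.univ := measureReal_univ_pos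
    positivity
  · intro x ρ hρ hρB
    rw [measureReal_ennreal_smul_apply, ENNReal.toReal_inv, mul_assoc, hball]
    exact mul_le_mul_of_nonneg_left
      (mul_rpow_le_setIntegral_closedBall_one_add_norm_rpow_neg μ hq hρ hρB) (by positivity)

end PolynomialBallMass

section GridBounds

variable {Ω E : Type*} [MeasurableSpace Ω] [NormedAddCommGroup E] {P : Measure Ω} {X : Ω → E}
  {d q r c R M T : ℝ} {Γ : Finset E} {a₀ : E}

lemma exists_mem_infDist_eq_dist_norm_le (ha₀ : a₀ ∈ Γ) (ha₀R : ‖a₀‖ ≤ R) (x : E) :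
    ∃ b ∈ Γ, infDist x Γ = dist x b ∧ 1 + ‖b‖ ≤ (2 + R) * (1 + ‖x‖) := by
  obtain ⟨b, hb, hxb⟩ := Γ.finite_toSet.isCompact.exists_infDist_eq_dist ⟨a₀, ha₀⟩ x
  refine ⟨b, hb, hxb, ?_⟩
  have hdist := infDist_le_mul_one_add_norm ha₀ ha₀R x
  rw [hxb, dist_eq_norm] at hdist
  linarith [norm_le_norm_add_norm_sub x b]

lemma card_mul_sub_distortion_le [DecidableEq E] [IsFiniteMeasure P] {m m' τ : ℝ}
    {S : Finset E} (hX : MemLp X (ENNReal.ofReal m) P) (hr : 0 ≤ r)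
    (hrm : r ≤ m) (hm' : 0 ≤ m') (hm'm : m' ≤ m) (hτ : 0 ≤ τ)
    (hM : ∫ ω, (1 + ‖X ω‖) ^ m ∂P ≤ M) (ha₀ : a₀ ∈ Γ) (ha₀R : ‖a₀‖ ≤ R)
    (hS : ∀ a ∈ S, infDist a (Γ.erase a) ^ r ≤ τ * (1 + ‖a‖) ^ m')
    (hT : ∀ a ∈ S, T ≤ distortion r P X (Γ.erase a)) :
    S.card * (T - distortion r P X Γ) ≤
      2 ^ r * (distortion r P X Γ + τ * (2 + R) ^ m' * M) := by
  have hR : 0 ≤ R := (norm_nonneg a₀).trans ha₀R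
  have hD := integrable_infDist_rpow hr hrm hX (Γ : Set E)
  have hW := integrable_one_add_norm_rpow hm' hm'm hX
  have hpoint (x : E) : ∑ a ∈ S, (infDist x (Γ.erase a) ^ r - infDist x Γ ^ r) ≤
      2 ^ r * (infDist x Γ ^ r + τ * (2 + R) ^ m' * (1 + ‖x‖) ^ m') := by
    obtain ⟨b, hb, hxb, hbx⟩ := exists_mem_infDist_eq_dist_norm_le ha₀ ha₀R x
    refine sum_infDist_erase_rpow_sub_le hr hb hxb (by positivity) fun hbS => ?_
    calc infDist b (Γ.erase b) ^ r ≤ τ * (1 + ‖b‖) ^ m' := hS b hbS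
      _ ≤ τ * ((2 + R) * (1 + ‖x‖)) ^ m' := by gcongr
      _ = τ * (2 + R) ^ m' * (1 + ‖x‖) ^ m' := by
        rw [mul_rpow (by positivity) (by positivity), mul_assoc]
  calc S.card * (T - distortion r P X Γ)
      ≤ ∫ ω, ∑ a ∈ S, (infDist (X ω) (Γ.erase a) ^ r - infDist (X ω) Γ ^ r) ∂P :=
        card_mul_sub_distortion_le_integral
          (fun Γ' => integrable_infDist_rpow hr hrm hX (Γ' : Set E)) hT
    _ ≤ ∫ ω, 2 ^ r * (infDist (X ω) Γ ^ r + τ * (2 + R) ^ m' * (1 + ‖X ω‖) ^ m') ∂P :=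
        integral_mono (integrable_finsetSum S fun a _ =>
          (integrable_infDist_rpow hr hrm hX _).sub hD)
          ((hD.add (hW.const_mul _)).const_mul _) fun ω => hpoint (X ω)
    _ = 2 ^ r * (distortion r P X Γ + τ * (2 + R) ^ m' * ∫ ω, (1 + ‖X ω‖) ^ m' ∂P) := by
        rw [integral_const_mul, integral_add hD (hW.const_mul _), integral_const_mul, distortion]
    _ ≤ 2 ^ r * (distortion r P X Γ + τ * (2 + R) ^ m' * M) := by
        gcongr
        exact (integral_one_add_norm_rpow_mono hm' hm'm hX).trans hM

variable [MeasurableSpace E] [BorelSpace E] {ν : Measure E} [IsProbabilityMeasure ν]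

lemma HasPolynomialBallMass.weightedDistortion_le [SecondCountableTopology E] [DecidableEq E]
    [IsFiniteMeasure P] (hν : HasPolynomialBallMass ν d q (1 + R) c)
    (hc : 0 < c) (hd : 0 ≤ d) (hr : 0 < r) (ha₀ : a₀ ∈ Γ) (ha₀R : ‖a₀‖ ≤ R)
    (hX : AEMeasurable X P) (hint : Integrable (fun ω => infDist (X ω) Γ ^ r) P)
    (hT : ∀ y, T ≤ distortion r P X (insert y Γ)) :
    weightedDistortion (r + d) q P X Γ ≤
      2 ^ d / (c * (1 - 2⁻¹ ^ r)) * (distortion r P X Γ - T) := by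
  have hhalf : 0 < 1 - (2⁻¹ : ℝ) ^ r := sub_pos.2 (rpow_lt_one (by norm_num) (by norm_num) hr)
  have hinsert := mul_integral_infDist_rpow_mul_le_distortion_sub hX hr.le ⟨a₀, ha₀⟩ hint hT
    (fun x => mul_nonneg hc.le <|
      mul_nonneg (rpow_nonneg (div_nonneg infDist_nonneg two_pos.le) d)
        (rpow_nonneg (by positivity : 0 ≤ 1 + ‖x‖) (-q)))
    fun x => hν x (infDist x Γ / 2) (div_nonneg infDist_nonneg two_pos.le)
      ((half_le_self infDist_nonneg).trans (infDist_le_mul_one_add_norm ha₀ ha₀R x))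
  have hweight (ω : Ω) : infDist (X ω) Γ ^ r *
      (c * ((infDist (X ω) Γ / 2) ^ d * (1 + ‖X ω‖) ^ (-q))) =
        c / 2 ^ d * (infDist (X ω) Γ ^ (r + d) * (1 + ‖X ω‖) ^ (-q)) := by
    rw [div_rpow infDist_nonneg two_pos.le, rpow_add_of_nonneg infDist_nonneg hr.le hd]
    ring
  simp only [hweight, integral_const_mul] at hinsert
  rw [div_mul_eq_mul_div, le_div_iff₀ (by positivity), weightedDistortion]
  calc (∫ ω, infDist (X ω) Γ ^ (r + d) * (1 + ‖X ω‖) ^ (-q) ∂P) * (c * (1 - 2⁻¹ ^ r))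
      = 2 ^ d * ((1 - 2⁻¹ ^ r) * (c / 2 ^ d *
          ∫ ω, infDist (X ω) Γ ^ (r + d) * (1 + ‖X ω‖) ^ (-q) ∂P)) := by
        field_simp
    _ ≤ 2 ^ d * (distortion r P X Γ - T) := by gcongr

/- The balls of radius a third of the distance to the rest of the grid are disjoint, hence half of
them have mass at most `2 / N`. -/
lemma HasPolynomialBallMass.exists_subset_infDist_erase_rpow_le [DecidableEq E]
    (hν : HasPolynomialBallMass ν d q (1 + R) c) (hc : 0 < c) (hd : 0 < d) (hr : 0 ≤ r)
    (ha₀ : a₀ ∈ Γ) (ha₀R : ‖a₀‖ ≤ R) {N : ℕ} (hcard : Γ.card = N + 1) :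
    ∃ S ⊆ Γ, (N : ℝ) ≤ 2 * S.card ∧ ∀ a ∈ S, infDist a (Γ.erase a) ^ r ≤
      3 ^ r * (2 / c) ^ (r / d) * (N : ℝ) ^ (-(r / d)) * (1 + ‖a‖) ^ (q * (r / d)) := by
  set mass : E → ℝ := fun a => ν.real (closedBall a (infDist a (Γ.erase a) / 3))
  have hcard_erase : (Γ.erase a₀).card = N := by simp [Finset.card_erase_of_mem ha₀, hcard]
  have hsum : ∑ a ∈ Γ.erase a₀, mass a ≤ 1 :=
    (Finset.sum_le_sum_of_subset_of_nonneg (Finset.erase_subset _ _) fun _ _ _ =>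
      measureReal_nonneg).trans (sum_measureReal_closedBall_infDist_erase_le Γ)
  refine ⟨(Γ.erase a₀).filter fun a => mass a ≤ 2 * 1 / (Γ.erase a₀).card,
    (Finset.filter_subset _ _).trans (Finset.erase_subset _ _), ?_, fun a ha => ?_⟩
  · have hhalf := card_le_two_mul_card_filter_le (fun _ _ => measureReal_nonneg) one_pos hsum
    rwa [hcard_erase] at hhalf ⊢
  obtain ⟨haΓ, hmass⟩ := Finset.mem_filter.1 ha
  rw [hcard_erase, mul_one] at hmass
  have ha₀a : a₀ ∈ Γ.erase a := Finset.mem_erase.2 ⟨(Finset.ne_of_mem_erase haΓ).symm, ha₀⟩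
  have hh : 0 ≤ infDist a (Γ.erase a) := infDist_nonneg
  have hradius : infDist a (Γ.erase a) / 3 ≤ (1 + R) * (1 + ‖a‖) :=
    (div_le_self hh (by norm_num)).trans (infDist_le_mul_one_add_norm ha₀a ha₀R a)
  have hρ := rpow_le_mul_rpow_of_mul_rpow_neg_le hd hr hc (by positivity) (by positivity)
    (by positivity) ((hν a _ (by positivity) hradius).trans hmass)
  calc infDist a (Γ.erase a) ^ r = 3 ^ r * (infDist a (Γ.erase a) / 3) ^ r := by
        rw [← mul_rpow (by positivity) (by positivity), mul_div_cancel₀ _ (by norm_num)]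
    _ ≤ 3 ^ r * ((2 / N / c) ^ (r / d) * (1 + ‖a‖) ^ (q * (r / d))) := by gcongr
    _ = _ := by
        rw [div_right_comm, div_rpow (by positivity) (by positivity), rpow_neg (by positivity)]
        ring

lemma HasPolynomialBallMass.natCast_mul_sub_distortion_le [DecidableEq E]
    [IsFiniteMeasure P] {m : ℝ}
    (hν : HasPolynomialBallMass ν d q (1 + R) c) (hc : 0 < c) (hd : 0 < d) (hr : 0 ≤ r)
    (hq : 0 ≤ q) (hX : MemLp X (ENNReal.ofReal m) P) (hrm : r ≤ m) (hqm : q * (r / d) ≤ m)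
    (hM : ∫ ω, (1 + ‖X ω‖) ^ m ∂P ≤ M) (ha₀ : a₀ ∈ Γ) (ha₀R : ‖a₀‖ ≤ R) {N : ℕ}
    (hcard : Γ.card = N + 1) (hT : ∀ a ∈ Γ, T ≤ distortion r P X (Γ.erase a))
    (hTΓ : distortion r P X Γ ≤ T) :
    N * (T - distortion r P X Γ) ≤ 2 * 2 ^ r *
      (distortion r P X Γ +
        3 ^ r * (2 / c) ^ (r / d) * (2 + R) ^ (q * (r / d)) * M * (N : ℝ) ^ (-(r / d))) := by
  obtain ⟨S, hSΓ, hNS, hS⟩ :=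
    hν.exists_subset_infDist_erase_rpow_le hc hd hr ha₀ ha₀R hcard
  have hloss := card_mul_sub_distortion_le hX hr hrm (by positivity) hqm (by positivity) hM ha₀
    ha₀R hS fun a ha => hT a (hSΓ ha)
  calc N * (T - distortion r P X Γ) ≤ 2 * S.card * (T - distortion r P X Γ) :=
        mul_le_mul_of_nonneg_right hNS (sub_nonneg.2 hTΓ)
    _ = 2 * (S.card * (T - distortion r P X Γ)) := mul_assoc _ _ _
    _ ≤ 2 * _ := mul_le_mul_of_nonneg_left hloss two_pos.le
    _ = _ := by ring

end GridBounds

section NormalizedRate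

lemma exists_weight_exponent {r d s m : ℝ} (hr : 0 < r) (hd : 0 < d) (hrs : r < s)
    (hst : s < r + d) (hm : s * d / (r + d - s) < m) :
    ∃ q, d < q ∧ q * (r / d) ≤ m ∧ q * (s / (r + d - s)) ≤ m ∧ r + d ≤ m + q ∧ s ≤ m := by
  have hs : 0 < s := hr.trans hrs
  have hts : 0 < r + d - s := sub_pos.2 hst
  have hsm : s ≤ m := by
    refine le_trans ?_ hm.le
    rw [le_div_iff₀ hts]
    gcongr
    linarith
  have hm0 : 0 < m := hs.trans_le hsm
  refine ⟨m * ((r + d - s) / s), ?_, ?_, ?_, ?_, hsm⟩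
  · rwa [← mul_div_assoc, lt_div_iff₀ hs, mul_comm d, ← div_lt_iff₀ hts]
  · rw [mul_assoc, div_mul_div_comm]
    refine mul_le_of_le_one_right hm0.le ((div_le_one (by positivity)).2 ?_)
    nlinarith
  · rw [mul_assoc, div_mul_div_cancel₀ hs.ne', div_self hts.ne', mul_one]
  · calc r + d = s * ((r + d) / s) := (mul_div_cancel₀ _ hs.ne').symm
      _ ≤ m * ((r + d) / s) := by gcongr
      _ = m + m * ((r + d - s) / s) := by field_simp; ring

variable {Ω E : Type*} [MeasurableSpace Ω] [NormedAddCommGroup E] [MeasurableSpace E]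
  [BorelSpace E]

lemma IsOptimalQuantizer.natCast_mul_distortion_sub_le {P : Measure Ω} [IsFiniteMeasure P]
    {X : Ω → E} {ν : Measure E} [IsProbabilityMeasure ν] {d q r c R m M : ℝ} {N : ℕ}
    {Γ Γ' : Finset E} {a₀ : E} (hΓ : IsOptimalQuantizer r P X N Γ)
    (hΓ' : IsOptimalQuantizer r P X (N + 1) Γ') (hN : 1 ≤ N)
    (hν : HasPolynomialBallMass ν d q (1 + R) c) (hc : 0 < c) (hd : 0 < d) (hr : 0 ≤ r)
    (hq : 0 ≤ q) (hX : MemLp X (ENNReal.ofReal m) P) (hrm : r ≤ m) (hqm : q * (r / d) ≤ m)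
    (hM : ∫ ω, (1 + ‖X ω‖) ^ m ∂P ≤ M) (ha₀ : a₀ ∈ Γ') (ha₀R : ‖a₀‖ ≤ R) :
    N * (distortion r P X Γ - distortion r P X Γ') ≤
      2 * 2 ^ r * (1 + 3 ^ r * (2 / c) ^ (r / d) * (2 + R) ^ (q * (r / d)) * M) *
        (distortion r P X Γ' + (N : ℝ) ^ (-(r / d))) := by
  classical
  have : 0 ≤ R := (norm_nonneg a₀).trans ha₀R
  have : 0 ≤ M := (integral_nonneg fun ω => by positivity).trans hM
  have hu : 0 ≤ distortion r P X Γ' := distortion_nonneg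
  set κ := 3 ^ r * (2 / c) ^ (r / d) * (2 + R) ^ (q * (r / d)) * M
  have hκ : 0 ≤ κ := by positivity
  have hx : 0 ≤ (N : ℝ) ^ (-(r / d)) := by positivity
  rcases hΓ'.card_le.eq_or_lt with hcard | hcard
  · calc N * (distortion r P X Γ - distortion r P X Γ')
        ≤ 2 * 2 ^ r * (distortion r P X Γ' + κ * (N : ℝ) ^ (-(r / d))) :=
          hν.natCast_mul_sub_distortion_le hc hd hr hq hX hrm hqm hM ha₀ ha₀R hcard
            (fun a ha => hΓ.distortion_le_distortion_erase hN hcard ha)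
            (hΓ'.distortion_le _ hΓ.nonempty (hΓ.card_le.trans N.le_succ))
      _ ≤ 2 * 2 ^ r * ((1 + κ) * (distortion r P X Γ' + (N : ℝ) ^ (-(r / d)))) := by
          gcongr
          linarith [mul_nonneg hκ hu]
      _ = _ := (mul_assoc _ _ _).symm
  · have hle : distortion r P X Γ ≤ distortion r P X Γ' :=
      hΓ.distortion_le Γ' hΓ'.nonempty (Nat.le_of_lt_succ hcard)
    exact (mul_nonpos_of_nonneg_of_nonpos N.cast_nonneg (sub_nonpos.2 hle)).trans (by positivity)

universe u

variable [NormedSpace ℝ E] [FiniteDimensional ℝ E] {r q s m : ℝ}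

lemma exists_forall_weightedDistortion_le (hr : 0 < r) (hd : 0 < Module.finrank ℝ E)
    (hq : Module.finrank ℝ E < q) (hrm : r ≤ m) (hqm : q * (r / Module.finrank ℝ E) ≤ m)
    (htm : r + Module.finrank ℝ E ≤ m + q) :
    ∃ C, 0 < C ∧ ∀ (Ω : Type u) [MeasurableSpace Ω] (P : Measure Ω) [IsProbabilityMeasure P]
      (X : Ω → E), MemLp X (ENNReal.ofReal m) P → ∫ ω, ‖X ω‖ ^ m ∂P ≤ 1 →
      ∀ Γ : ℕ → Finset E, (∀ N, 1 ≤ N → IsOptimalQuantizer r P X N (Γ N)) → ∀ N, 1 ≤ N →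
        weightedDistortion (r + Module.finrank ℝ E) q P X (Γ N) ≤
          C * (N : ℝ) ^ (-((r + Module.finrank ℝ E) / Module.finrank ℝ E)) := by
  classical
  set d := (Module.finrank ℝ E : ℝ)
  have hd0 : 0 < d := Nat.cast_pos.2 hd
  have hm : 0 ≤ m := hr.le.trans hrm
  set M : ℝ := 2 ^ m * 2
  set R : ℝ := (2 ^ r * (2 * M)) ^ r⁻¹
  obtain ⟨ν, _, c, hc, hν⟩ := exists_hasPolynomialBallMass (E := E) (B := 1 + R) hq (by positivity)
  set κ : ℝ := 3 ^ r * (2 / c) ^ (r / d) * (2 + R) ^ (q * (r / d)) * M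
  have : 0 < 1 - (2⁻¹ : ℝ) ^ r := sub_pos.2 (rpow_lt_one (by norm_num) (by norm_num) hr)
  obtain ⟨C, hC, hrate⟩ := exists_forall_le_mul_rpow_of_increment_bounds (M := M)
    (C₁ := 2 ^ d / (c * (1 - 2⁻¹ ^ r))) (C₂ := 2 * 2 ^ r * (1 + κ)) hr hd0 (by positivity)
    (by positivity) (by positivity)
  refine ⟨C, hC, fun Ω _ P _ X hX hX1 Γ hΓ => ?_⟩
  have hM : ∫ ω, (1 + ‖X ω‖) ^ m ∂P ≤ M :=
    integral_one_add_norm_rpow_le_of_integral_norm_rpow_le_one hm hX hX1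
  have hXr : MemLp X (ENNReal.ofReal r) P := hX.mono_exponent (ENNReal.ofReal_le_ofReal hrm)
  have hMr : ∫ ω, ‖X ω‖ ^ r ∂P ≤ M :=
    (integral_norm_rpow_le_integral_one_add_norm_rpow hr.le hrm hX).trans hM
  have hzero (N : ℕ) (hN : 1 ≤ N) : distortion r P X (Γ N) ≤ distortion r P X {0} :=
    (hΓ N hN).distortion_le _ (Finset.singleton_nonempty 0) (by simpa using hN)
  have hnear (N : ℕ) (hN : 1 ≤ N) : ∃ a ∈ Γ N, ‖a‖ ≤ R :=
    exists_norm_le_of_distortion_le_distortion_zero hr hXr hMr (hΓ N hN).nonempty (hzero N hN)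
  refine hrate (fun N => distortion r P X (Γ N)) (fun N => weightedDistortion (r + d) q P X (Γ N))
    (fun N => distortion_nonneg) (fun N => weightedDistortion_nonneg)
    ((hzero 1 le_rfl).trans (distortion_singleton_zero (P := P) (X := X) r ▸ hMr))
    (fun N hN => ?_) (fun N hN => ?_) fun N hN => ?_
  · simpa using distortion_le_weightedDistortion_rpow_mul_rpow hX hr (lt_add_of_pos_right r hd0)
      (hd0.trans hq).le (by simpa using hqm) htm hM (hΓ N hN).nonempty
  · obtain ⟨a, ha, haR⟩ := hnear N hN
    exact hν.weightedDistortion_le hc hd0.le hr ha haR hX.1.aemeasurable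
      (integrable_infDist_rpow hr.le hrm hX _)
      ((hΓ (N + 1) (by lia)).distortion_le_distortion_insert (hΓ N hN).card_le)
  · obtain ⟨a, ha, haR⟩ := hnear (N + 1) (by lia)
    exact (hΓ N hN).natCast_mul_distortion_sub_le (hΓ (N + 1) (by lia)) hN hν hc hd0 hr.le
      (hd0.trans hq).le hX hrm hqm hM ha haR

lemma exists_forall_distortion_le_of_integral_norm_rpow_le_one (hr : 0 < r) (hrs : r < s)
    (hs : s < r + Module.finrank ℝ E)
    (hm : s * Module.finrank ℝ E / (r + Module.finrank ℝ E - s) < m) :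
    ∃ K, 0 < K ∧ ∀ (Ω : Type u) [MeasurableSpace Ω] (P : Measure Ω) [IsProbabilityMeasure P]
      (X : Ω → E), MemLp X (ENNReal.ofReal m) P → ∫ ω, ‖X ω‖ ^ m ∂P ≤ 1 →
      ∀ Γ : ℕ → Finset E, (∀ N, 1 ≤ N → IsOptimalQuantizer r P X N (Γ N)) → ∀ N, 1 ≤ N →
        distortion s P X (Γ N) ≤ K * (N : ℝ) ^ (-(s / Module.finrank ℝ E)) := by
  have hd : (0 : ℝ) < Module.finrank ℝ E := by linarith
  obtain ⟨q, hq, hqr, hqs, htm, hsm⟩ := exists_weight_exponent hr hd hrs hs hm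
  obtain ⟨C, hC, hrate⟩ := exists_forall_weightedDistortion_le (E := E) hr (Nat.cast_pos.1 hd) hq
    (hrs.le.trans hsm) hqr htm
  set d := (Module.finrank ℝ E : ℝ)
  have hs0 : 0 < s := hr.trans hrs
  refine ⟨C ^ (s / (r + d)) * (2 ^ m * 2) ^ ((r + d - s) / (r + d)), by positivity,
    fun Ω _ P _ X hX hX1 Γ hΓ N hN => ?_⟩
  have hM := integral_one_add_norm_rpow_le_of_integral_norm_rpow_le_one (hs0.le.trans hsm) hX hX1
  have hexp : -((r + d) / d) * (s / (r + d)) = -(s / d) := by field_simp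
  calc distortion s P X (Γ N)
      ≤ weightedDistortion (r + d) q P X (Γ N) ^ (s / (r + d)) *
          (2 ^ m * 2) ^ ((r + d - s) / (r + d)) :=
        distortion_le_weightedDistortion_rpow_mul_rpow hX hs0 hs (hd.trans hq).le hqs htm hM
          (hΓ N hN).nonempty
    _ ≤ (C * (N : ℝ) ^ (-((r + d) / d))) ^ (s / (r + d)) *
          (2 ^ m * 2) ^ ((r + d - s) / (r + d)) := by
        gcongr
        · exact weightedDistortion_nonneg
        · exact hrate Ω P X hX hX1 Γ hΓ N hN
    _ = C ^ (s / (r + d)) * (2 ^ m * 2) ^ ((r + d - s) / (r + d)) * (N : ℝ) ^ (-(s / d)) := by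
        rw [mul_rpow hC.le (by positivity), ← rpow_mul N.cast_nonneg, hexp]
        ring

end NormalizedRate

section Dilation

variable {Ω E F : Type*} [MeasurableSpace Ω] [PseudoMetricSpace E] [PseudoMetricSpace F]
  {p : ℝ} {P : Measure Ω} {X : Ω → E}

lemma infDist_map_dilationEquiv (e : E ≃ᵈ F) (x : E) (Γ : Finset E) :
    infDist (e x) (Γ.map e.toEquiv.toEmbedding) = Dilation.ratio e * infDist x Γ := by
  have hedist : infEDist (e x) (e '' Γ) = Dilation.ratio e * infEDist x Γ := by
    simp only [infEDist, iInf_image, Dilation.edist_eq, ENNReal.mul_iInf_of_ne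
      (ENNReal.coe_ne_zero.2 (Dilation.ratio_ne_zero e)) ENNReal.coe_ne_top]
  simpa [infDist] using congrArg ENNReal.toReal hedist

lemma distortion_comp_dilationEquiv (e : E ≃ᵈ F) (p : ℝ) (Γ : Finset E) :
    distortion p P (e ∘ X) (Γ.map e.toEquiv.toEmbedding) =
      (Dilation.ratio e : ℝ) ^ p * distortion p P X Γ := by
  simp only [distortion, Function.comp_apply, infDist_map_dilationEquiv,
    mul_rpow NNReal.zero_le_coe infDist_nonneg, integral_const_mul]

lemma IsOptimalQuantizer.map_dilationEquiv {N : ℕ} {Γ : Finset E}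
    (hΓ : IsOptimalQuantizer p P X N Γ) (e : E ≃ᵈ F) :
    IsOptimalQuantizer p P (e ∘ X) N (Γ.map e.toEquiv.toEmbedding) where
  nonempty := hΓ.nonempty.map
  card_le := (Γ.card_map _).trans_le hΓ.card_le
  distortion_le Γ' hne hcard := by
    obtain ⟨Δ, rfl⟩ : ∃ Δ : Finset E, Δ.map e.toEquiv.toEmbedding = Γ' :=
      (Equiv.finsetCongr e.toEquiv).surjective Γ'
    rw [Finset.map_nonempty] at hne
    rw [Finset.card_map] at hcard
    rw [distortion_comp_dilationEquiv, distortion_comp_dilationEquiv]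
    exact mul_le_mul_of_nonneg_left (hΓ.distortion_le Δ hne hcard) (by positivity)

end Dilation

section MainResult

universe u

variable {E : Type*} [NormedAddCommGroup E] [NormedSpace ℝ E] [FiniteDimensional ℝ E]
  [MeasurableSpace E] [BorelSpace E] {r s m : ℝ}

lemma exists_forall_distortion_le_of_integral_norm_sub_rpow_le (hr : 0 < r) (hrs : r < s)
    (hs : s < r + Module.finrank ℝ E)
    (hm : s * Module.finrank ℝ E / (r + Module.finrank ℝ E - s) < m) :
    ∃ K, 0 < K ∧ ∀ (Ω : Type u) [MeasurableSpace Ω] (P : Measure Ω) [IsProbabilityMeasure P]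
      (X : Ω → E), MemLp X (ENNReal.ofReal m) P →
      ∀ (a : E) (l : ℝ), 0 < l → ∫ ω, ‖X ω - a‖ ^ m ∂P ≤ l ^ m →
      ∀ Γ : ℕ → Finset E, (∀ N, 1 ≤ N → IsOptimalQuantizer r P X N (Γ N)) → ∀ N, 1 ≤ N →
        distortion s P X (Γ N) ≤ K * l ^ s * (N : ℝ) ^ (-(s / Module.finrank ℝ E)) := by
  obtain ⟨K, hK, hrate⟩ := exists_forall_distortion_le_of_integral_norm_rpow_le_one hr hrs hs hm
  refine ⟨K, hK, fun Ω _ P _ X hX a l hl hXa Γ hΓ N hN => ?_⟩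
  have hd : (0 : ℝ) < Module.finrank ℝ E := by linarith
  have : Nontrivial E := Module.finrank_pos_iff.1 (Nat.cast_pos.1 hd)
  obtain ⟨x, hx⟩ := exists_ne (0 : E)
  let e : E ≃ᵈ E := (DilationEquiv.smulTorsor a hl.ne').symm
  have he (y : E) : e y = l⁻¹ • (y - a) := rfl
  have hratio : (Dilation.ratio e : ℝ) = l⁻¹ := by
    rw [DilationEquiv.ratio_symm, DilationEquiv.smulTorsor_ratio hl.ne' (dist_ne_zero.2 hx)]
    simp [abs_of_pos hl]
  have hY : MemLp (e ∘ X) (ENNReal.ofReal m) P := (hX.sub (memLp_const a)).const_smul l⁻¹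
  have hY1 : ∫ ω, ‖(e ∘ X) ω‖ ^ m ∂P ≤ 1 := by
    simp only [Function.comp_apply, he, norm_smul, norm_inv, norm_of_nonneg hl.le,
      mul_rpow (inv_nonneg.2 hl.le) (norm_nonneg _), inv_rpow hl.le, integral_const_mul]
    exact (inv_mul_le_one₀ (by positivity)).2 hXa
  have hN := hrate Ω P (e ∘ X) hY hY1 (fun N => (Γ N).map e.toEquiv.toEmbedding)
    (fun N hN => (hΓ N hN).map_dilationEquiv e) N hN
  rw [distortion_comp_dilationEquiv, hratio, inv_rpow hl.le,
    inv_mul_le_iff₀ (by positivity)] at hN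
  linarith

theorem distortion_mismatch_all_moments_general (hr : 0 < r) (hrs : r < s)
    (hs : s < Module.finrank ℝ E + r)
    (hm : s * Module.finrank ℝ E / (Module.finrank ℝ E + r - s) < m) :
    ∃ K : ℝ, ∀ (Ω : Type u) [MeasurableSpace Ω] (P : Measure Ω) [IsProbabilityMeasure P]
      (X : Ω → E), MemLp X (ENNReal.ofReal m) P →
      ∀ Γ : ℕ → Finset E, (∀ N, 1 ≤ N → IsOptimalQuantizer r P X N (Γ N)) → ∀ N, 1 ≤ N →
        distortion s P X (Γ N) ^ (1 / s) ≤
          K * (⨅ a, (∫ ω, ‖X ω - a‖ ^ m ∂P) ^ (1 / m)) *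
            (N : ℝ) ^ (-(1 / (Module.finrank ℝ E : ℝ))) := by
  rw [add_comm] at hs hm
  have hs0 : 0 < s := hr.trans hrs
  have hd : (0 : ℝ) < Module.finrank ℝ E := by linarith
  have hm0 : 0 < m := hm.trans_le' (div_nonneg (by positivity) (by linarith))
  obtain ⟨K, hK, hrate⟩ := exists_forall_distortion_le_of_integral_norm_sub_rpow_le hr hrs hs hm
  refine ⟨K ^ (1 / s), fun Ω _ P _ X hX Γ hΓ N hN => ?_⟩
  set D := distortion s P X (Γ N) ^ (1 / s)
  set σ := ⨅ a, (∫ ω, ‖X ω - a‖ ^ m ∂P) ^ (1 / m)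
  have hN0 : (0 : ℝ) < N := Nat.cast_pos.2 hN
  have hbase (a : E) : 0 ≤ ∫ ω, ‖X ω - a‖ ^ m ∂P := integral_nonneg fun ω => by positivity
  have hσ : 0 ≤ σ := iInf_nonneg fun a => rpow_nonneg (hbase a) _
  have hbound (l : ℝ) (hl : σ < l) :
      D ≤ K ^ (1 / s) * l * (N : ℝ) ^ (-(1 / (Module.finrank ℝ E : ℝ))) := by
    have hl0 : 0 < l := hσ.trans_lt hl
    obtain ⟨a, ha⟩ := exists_lt_of_ciInf_lt hl
    rw [one_div, rpow_inv_lt_iff_of_pos (hbase a) hl0.le hm0] at ha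
    have hexp : -(s / Module.finrank ℝ E) * (1 / s) = -(1 / (Module.finrank ℝ E : ℝ)) := by
      field_simp
    calc D ≤ (K * l ^ s * (N : ℝ) ^ (-(s / Module.finrank ℝ E))) ^ (1 / s) := by
          refine rpow_le_rpow distortion_nonneg ?_ (by positivity)
          exact hrate Ω P X hX a l hl0 ha.le Γ hΓ N hN
      _ = K ^ (1 / s) * l * (N : ℝ) ^ (-(1 / (Module.finrank ℝ E : ℝ))) := by
          rw [mul_rpow (by positivity) (by positivity), mul_rpow hK.le (by positivity),
            ← rpow_mul hl0.le, ← rpow_mul hN0.le, hexp, mul_one_div_cancel hs0.ne', rpow_one]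
  /- Let `l → σ` rather than take `l = σ`: there is no dilation by `l⁻¹` when `σ = 0`. -/
  have hlim : Filter.Tendsto
      (fun l => K ^ (1 / s) * l * (N : ℝ) ^ (-(1 / (Module.finrank ℝ E : ℝ))))
      (nhdsWithin σ (Set.Ioi σ))
      (nhds (K ^ (1 / s) * σ * (N : ℝ) ^ (-(1 / (Module.finrank ℝ E : ℝ))))) :=
    (Continuous.tendsto (by fun_prop) σ).mono_left nhdsWithin_le_nhds
  exact ge_of_tendsto hlim (eventually_mem_nhdsWithin.mono hbound)

end MainResult

lemma isOptimalQuantizer_of_quantErrRV_eq_optQuantErrRV {d N : ℕ} {Ω : Type*}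
    [MeasurableSpace Ω] {P : Measure Ω} {X : Ω → Euc d} {p : ℝ} {Γ : Finset (Euc d)} (hp : 0 < p)
    (hne : Γ.Nonempty) (hcard : Γ.card ≤ N) (h : quantErrRV p P X Γ = optQuantErrRV p N P X) :
    IsOptimalQuantizer p P X N Γ := by
  refine ⟨hne, hcard, fun Γ' hne' hcard' => ?_⟩
  rw [← rpow_le_rpow_iff distortion_nonneg distortion_nonneg (one_div_pos.2 hp)]
  refine h.trans_le (csInf_le ⟨0, ?_⟩ ⟨Γ', hne', hcard', rfl⟩)
  rintro _ ⟨Δ, -, -, rfl⟩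
  exact rpow_nonneg distortion_nonneg _

/-- **Distortion mismatch, all-moments version.** Let `r > 0` and `X` an ℝ^d-valued random
vector with finite moments of every order, whose law has a non-zero absolutely continuous
component w.r.t. Lebesgue measure.  Let `(Γ_N)` be a sequence of `L^r`-optimal quantizers of
`X`.  Then for every `s ∈ (r, d+r)` and every `r' > sd/(d+r−s)` there is a finite constant
`K̃_{d,r,r',s}` (depending only on `d, r, r', s`) with
`e_s(Γ_N, X) ≤ K̃ · σ_{r'}(X) · N^{−1/d}` for all `N ≥ 1`. -/
theorem distortion_mismatch_all_moments (d : ℕ) (hd : 1 ≤ d) (r r' s : ℝ) (hr : 0 < r)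
    (hs : r < s) (hs' : s < d + r) (hr' : s * d / (d + r - s) < r') :
    ∃ K : ℝ, ∀ (Ω : Type) (_ : MeasurableSpace Ω) (P : Measure Ω), IsProbabilityMeasure P →
      ∀ X : Ω → Euc d, Measurable X →
        (∀ m : ℝ, 0 < m → Integrable (fun ω => ‖X ω‖ ^ m) P) →
        ¬ (P.map X).MutuallySingular (volume : Measure (Euc d)) →
        ∀ Γ : ℕ → Finset (Euc d),
          (∀ N : ℕ, 1 ≤ N → (Γ N).Nonempty ∧ (Γ N).card ≤ N ∧
            quantErrRV r P X (Γ N) = optQuantErrRV r N P X) →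
          ∀ N : ℕ, 1 ≤ N →
            quantErrRV s P X (Γ N) ≤ K * sigmaRV r' P X * (N : ℝ) ^ (-(1 / (d : ℝ))) := by
  have hd0 : Module.finrank ℝ (Euc d) = d := finrank_euclideanSpace_fin
  have hr'0 : 0 < r' := hr'.trans_le' <|
    div_nonneg (mul_nonneg (hr.trans hs).le d.cast_nonneg) (sub_pos.2 hs').le
  obtain ⟨K, hK⟩ := distortion_mismatch_all_moments_general.{0} (E := Euc d) (m := r') hr hs
    (by rwa [hd0]) (by rwa [hd0])
  refine ⟨K, fun Ω _ P _ X hXm hmom _ Γ hΓ N hN => ?_⟩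
  have hX : MemLp X (ENNReal.ofReal r') P := (memLp_norm_iff hXm.aestronglyMeasurable).1 <|
    memLp_of_integrable_rpow hr'0 hXm.norm.aemeasurable (fun _ => norm_nonneg _) (hmom r' hr'0)
  have hN := hK Ω P X hX Γ (fun n hn =>
    isOptimalQuantizer_of_quantErrRV_eq_optQuantErrRV hr (hΓ n hn).1 (hΓ n hn).2.1 (hΓ n hn).2.2)
    N hN
  rwa [hd0] at hN
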